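/- arXiv:0812.1173 — 3 statements merged into one kernel-verified Lean document; each statement's English description precedes it below -/
import Mathlib

section
/- Let M be a monoid and let e, e′ ∈ M be idempotents that commute (ee′ = e′e). Suppose there exist units w, w′ of M such that e·w = e′·w′. Then e = e′. -/
section Semigroup

variable {S : Type*} [Semigroup S]

theorem mul_eq_right_of_isIdempotentElem_of_dvd {e a : S} (he : IsIdempotentElem e) (h : e ∣ a) :
    e * a = a := by
  obtain ⟨b, rfl⟩ := h
  exact he.mul_self_mul b

theorem mul_eq_right_of_isIdempotentElem_of_dvd_mul {e a w : S} (he : IsIdempotentElem e)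
    (hw : IsRightRegular w) (h : e ∣ a * w) : e * a = a :=
  hw <| calc
    e * a * w = e * (a * w) := mul_assoc e a w
    _ = a * w := mul_eq_right_of_isIdempotentElem_of_dvd he h

theorem idempotent_unique_in_unit_factorization_general {e e' w w' : S}
    (he : IsIdempotentElem e) (he' : IsIdempotentElem e') (hcomm : Commute e e')
    (hw : IsRightRegular w) (hw' : IsRightRegular w') (h : e * w = e' * w') : e = e' :=
  calc
    e = e' * e := (mul_eq_right_of_isIdempotentElem_of_dvd_mul he' hw ⟨w', h⟩).symm
    _ = e * e' := hcomm.eq.symm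
    _ = e' := mul_eq_right_of_isIdempotentElem_of_dvd_mul he hw' ⟨w, h.symm⟩

end Semigroup

/-- Let `M` be a monoid and `e, e'` commuting idempotents.
If `e * w = e' * w'` for some units `w, w'` of `M`, then `e = e'`. -/
theorem idempotent_unique_in_unit_factorization {M : Type*} [Monoid M] (e e' : M)
    (he : e * e = e) (he' : e' * e' = e') (hcomm : e * e' = e' * e)
    (h : ∃ w w' : Mˣ, e * (w : M) = e' * (w' : M)) : e = e' := by
  obtain ⟨w, w', h⟩ := h
  exact idempotent_unique_in_unit_factorization_general he he' hcomm
    w.isUnit.isRegular.right w'.isUnit.isRegular.right h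
end

section
/- Let M be a monoid, e ∈ M an idempotent, and w a unit of M of finite order (wⁿ = 1 for some n ≥ 1). Set f = w·e·w⁻¹. If e·f = f and f·e = f, then f = e. Consequently, two distinct idempotents of M that are conjugate by a unit of finite order are never comparable in the natural partial order on commuting idempotents. -/
/-!
Conjugation by `w` preserves the relation `f ≤ e ↔ e * f = f ∧ f * e = f`, so `w * e * w⁻¹ ≤ e`
yields a descending chain `e ≥ w * e * w⁻¹ ≥ w ^ 2 * e * w ^ (-2) ≥ ⋯`. As `w` has finite order, the
chain returns to `e`, and antisymmetry collapses it. The case `e ≤ w * e * w⁻¹` is dual.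
-/

open Function

section Relation

variable {α : Type*} {r : α → α → Prop} {g : α → α} {x : α}

theorem rel_iterate_succ_of_rel_map [IsTrans α r] (hg : ∀ ⦃a b⦄, r a b → r (g a) (g b))
    (h : r (g x) x) (k : ℕ) : r (g^[k + 1] x) x := by
  induction k with
  | zero => exact h
  | succ k ih =>
    rw [iterate_succ_apply']
    exact trans_of r (hg ih) h

theorem map_eq_of_rel_map_of_mem_periodicPts [IsTrans α r] [Std.Antisymm r]
    (hg : ∀ ⦃a b⦄, r a b → r (g a) (g b)) (hx : x ∈ periodicPts g) (h : r (g x) x) :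
    g x = x := by
  obtain ⟨n, hn, hperiod⟩ := hx
  obtain _ | _ | k := n
  · exact absurd hn (lt_irrefl 0)
  · exact hperiod
  · have hback : r (g^[k + 2] x) (g x) := by
      rw [iterate_succ_apply']
      exact hg (rel_iterate_succ_of_rel_map hg h k)
    rw [hperiod.eq] at hback
    exact antisymm_of r h hback

end Relation

theorem smul_mem_periodicPts_of_isOfFinOrder {G α : Type*} [Monoid G] [MulAction G α] {g : G}
    (hg : IsOfFinOrder g) (x : α) : x ∈ periodicPts (g • · : α → α) := by
  obtain ⟨n, hn, hpow⟩ := isOfFinOrder_iff_pow_eq_one.mp hg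
  exact mk_mem_periodicPts hn (MulAction.isPeriodicPt_smul_iff.mpr (by rw [hpow, one_smul]))

/-- The natural partial order `a ≤ b` on the idempotents of a semigroup. It is stated for arbitrary
elements, where it is still transitive and antisymmetric, but reflexive only at idempotents. -/
def NaturalLE {S : Type*} [Mul S] (a b : S) : Prop :=
  b * a = a ∧ a * b = a

namespace NaturalLE

variable {S : Type*}

theorem antisymm [Mul S] {a b : S} (hab : NaturalLE a b) (hba : NaturalLE b a) : a = b :=
  hab.1.symm.trans hba.2

theorem trans [Semigroup S] {a b c : S} (hab : NaturalLE a b) (hbc : NaturalLE b c) :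
    NaturalLE a c where
  left := by rw [← hab.1, ← mul_assoc, hbc.1]
  right := by rw [← hab.2, mul_assoc, hbc.2]

theorem map {T F : Type*} [Mul S] [Mul T] [FunLike F S T] [MulHomClass F S T] (φ : F) {a b : S}
    (h : NaturalLE a b) : NaturalLE (φ a) (φ b) where
  left := by rw [← map_mul, h.1]
  right := by rw [← map_mul, h.2]

instance [Mul S] : Std.Antisymm (NaturalLE (S := S)) := ⟨fun _ _ => antisymm⟩

instance [Semigroup S] : IsTrans S NaturalLE := ⟨fun _ _ _ => trans⟩

end NaturalLE

theorem conjugate_idempotent_le_imp_eq_general {S F : Type*} [Semigroup S] [FunLike F S S]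
    [MulHomClass F S S] (φ : F) {e : S} (he : e ∈ periodicPts φ)
    (h : NaturalLE (φ e) e ∨ NaturalLE e (φ e)) : φ e = e := by
  obtain hle | hge := h
  · exact map_eq_of_rel_map_of_mem_periodicPts (r := NaturalLE)
      (fun _ _ => NaturalLE.map φ) he hle
  · exact map_eq_of_rel_map_of_mem_periodicPts (r := swap NaturalLE)
      (fun _ _ => NaturalLE.map φ) he hge

/-- Let `M` be a monoid, `e ∈ M` an idempotent and `w` a unit of finite
order (`w ^ n = 1`, `n ≥ 1`). Set `f = w·e·w⁻¹`. If `e·f = f` and `f·e = f`, then `f = e`.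
Consequently, two distinct idempotents of `M` conjugate by a unit of finite order are never
comparable in the natural partial order on commuting idempotents (`f ≤ e` iff `ef = f = fe`). -/
theorem conjugate_idempotent_le_imp_eq {M : Type*} [Monoid M] (e : M) (he : e * e = e)
    (w : Mˣ) (n : ℕ) (hn : 1 ≤ n) (hw : w ^ n = 1)
    (f : M) (hf : f = (w : M) * e * ((w⁻¹ : Mˣ) : M)) :
    ((e * f = f ∧ f * e = f) → f = e) ∧
      (f ≠ e → ¬ ((e * f = f ∧ f * e = f) ∨ (f * e = e ∧ e * f = e))) := by
  have hfin : IsOfFinOrder (ConjAct.toConjAct w) := isOfFinOrder_iff_pow_eq_one.mpr ⟨n, hn, hw⟩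
  obtain rfl : f = ConjAct.toConjAct w • e := hf
  have heq := conjugate_idempotent_le_imp_eq_general
    (MulDistribMulAction.toMonoidHom M (ConjAct.toConjAct w))
    (smul_mem_periodicPts_of_isOfFinOrder hfin e)
  exact ⟨heq ∘ .inl, mt heq⟩
end

section
/- For every natural number n, the monoid algebra over ℂ of the rook monoid R_n (the symmetric inverse monoid of all partial bijections of {1,…,n} under composition) is isomorphic, as a ℂ-algebra, to the direct product ∏_{r=0}^{n} M_{C(n,r)}(ℂ[S_r]) of the algebras of C(n,r) × C(n,r) matrices with entries in the group algebra ℂ[S_r] of the symmetric group S_r, where C(n,r) is the binomial coefficient. -/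
/-- The rook monoid (symmetric inverse monoid) `R_n`: all partial bijections of
`{1,…,n}` under composition. -/
instance rookMonoid (n : ℕ) : Monoid (Fin n ≃. Fin n) where
  mul f g := g.trans f
  one := PEquiv.refl (Fin n)
  mul_assoc f g h := (PEquiv.trans_assoc h g f).symm
  one_mul f := PEquiv.trans_refl f
  mul_one f := PEquiv.refl_trans f

/-!
A partial bijection of rank `r` is uniquely `j k ↦ i (σ k)`, where `j` and `i` are the increasing
enumerations of its domain and range and `σ ∈ S_r`. The partial bijections thus also index the
basis `σ • E_{ij}` of `∏ r, M_{C(n,r)}(R[S_r])`. The left action of `R_n` on embeddings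
`Fin r ↪ Fin n`, which commutes with the free right action of `S_r`, gives a homomorphism sending
`f` to the sum of the basis vectors indexed by the restrictions `g ≤ f`. In these bases it is the
zeta matrix of the finite poset `R_n`, which is unitriangular, hence invertible.
-/

namespace RookMonoid

open Function Module

section ZetaMatrix

variable {R P M N : Type*} [Ring R] [AddCommMonoid M] [AddCommGroup N] [Module R M] [Module R N]
  [PartialOrder P]

open scoped Classical in
theorem surjective_of_repr_eq_ite_le [Finite P] (b : Basis P R M) (c : Basis P R N)
    (T : M →ₗ[R] N) (hT : ∀ p q, c.repr (T (b p)) q = if q ≤ p then 1 else 0) :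
    Surjective T := by
  have := Fintype.ofFinite P
  have apply_basis (p : P) : T (b p) = c p + ∑ q with q < p, c q := by
    rw [← c.sum_repr (T (b p))]
    simp only [hT, ite_smul, one_smul, zero_smul, ← Finset.sum_filter]
    rw [← Finset.sum_insert (by simp)]
    congr 1
    ext q
    simp [le_iff_eq_or_lt]
  have basis_mem_range (p : P) : c p ∈ LinearMap.range T := by
    induction p using WellFoundedLT.induction with
    | ind p ih =>
      rw [eq_sub_of_add_eq (apply_basis p).symm]
      exact Submodule.sub_mem _ (LinearMap.mem_range_self T _)
        (Submodule.sum_mem _ fun q hq ↦ ih q (Finset.mem_filter.1 hq).2)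
  rw [← LinearMap.range_eq_top, eq_top_iff, ← c.span_eq, Submodule.span_le]
  exact Set.range_subset_iff.2 basis_mem_range

open scoped Classical in
theorem bijective_of_repr_eq_ite_le [OrzechProperty R] [Finite P] (b : Basis P R M)
    (c : Basis P R N) (T : M →ₗ[R] N)
    (hT : ∀ p q, c.repr (T (b p)) q = if q ≤ p then 1 else 0) : Bijective T := by
  have := Module.Finite.of_basis c
  let e : M ≃ₗ[R] N := b.equiv c (.refl P)
  exact OrzechProperty.bijective_of_surjective_of_injective e.toLinearMap T e.injective
    (surjective_of_repr_eq_ite_le b c T hT)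

end ZetaMatrix

section Transporter

variable {κ κ' α β γ : Type*} {a : κ ↪ α} {b b' : κ ↪ β}

/-- The partial bijection `b ∘ a⁻¹` from the range of `a` to the range of `b`. It is the least one
that carries `a` to `b`: a partial bijection `f` does so iff `transporter a b ≤ f`. -/
noncomputable def transporter (a : κ ↪ α) (b : κ ↪ β) : α ≃. β where
  toFun x := (partialInv a x).map b
  invFun y := (partialInv b y).map a
  inv x y := by
    simp only [Option.map_eq_some_iff, a.injective.isPartialInv _ _, b.injective.isPartialInv _ _,
      and_comm]

theorem transporter_eq_some_iff {x : α} {y : β} :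
    transporter a b x = some y ↔ ∃ k, a k = x ∧ b k = y := by
  change (partialInv a x).map b = some y ↔ _
  simp only [Option.map_eq_some_iff, a.injective.isPartialInv _ _]

theorem transporter_le_iff {f : α ≃. β} :
    transporter a b ≤ f ↔ ∀ k, f (a k) = some (b k) := by
  simp only [PEquiv.le_def, Option.mem_def, transporter_eq_some_iff]
  aesop

theorem transporter_le_refl_iff {a' : κ ↪ α} :
    transporter a a' ≤ PEquiv.refl α ↔ a' = a := by
  simp only [transporter_le_iff, PEquiv.refl_apply, Option.some_inj, DFunLike.ext_iff, eq_comm]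

theorem transporter_le_trans_iff {c : κ ↪ γ} {f : α ≃. β} {g : β ≃. γ} :
    transporter a c ≤ f.trans g ↔ ∃ b : κ ↪ β, transporter a b ≤ f ∧ transporter b c ≤ g := by
  simp only [transporter_le_iff, PEquiv.trans_eq_some]
  constructor
  · intro h
    choose b hf hg using h
    have b_injective : Injective b := fun k l hkl ↦ a.injective (f.inj (hf k) (hkl ▸ hf l))
    exact ⟨⟨b, b_injective⟩, hf, hg⟩
  · rintro ⟨b, hf, hg⟩ k
    exact ⟨b k, hf k, hg k⟩

theorem eq_of_transporter_le {f : α ≃. β} (h : transporter a b ≤ f) (h' : transporter a b' ≤ f) :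
    b = b' := by
  ext k
  exact Option.some.inj ((transporter_le_iff.1 h k).symm.trans (transporter_le_iff.1 h' k))

open scoped Classical in
theorem sum_ite_transporter_le_trans {A : Type*} [AddCommMonoid A] [Fintype (κ ↪ β)]
    (a : κ ↪ α) (c : κ ↪ γ) (f : α ≃. β) (g : β ≃. γ) (x : A) :
    (∑ b : κ ↪ β, if transporter a b ≤ f ∧ transporter b c ≤ g then x else 0) =
      if transporter a c ≤ f.trans g then x else 0 := by
  by_cases h : transporter a c ≤ f.trans g
  · obtain ⟨b, hf, hg⟩ := transporter_le_trans_iff.1 h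
    rw [if_pos h, Fintype.sum_eq_single b, if_pos ⟨hf, hg⟩]
    exact fun b' hb' ↦ if_neg fun h' ↦ hb' (eq_of_transporter_le h'.1 hf)
  · rw [if_neg h]
    exact Finset.sum_eq_zero fun b _ ↦ if_neg fun hb ↦ h (transporter_le_trans_iff.2 ⟨b, hb⟩)

theorem transporter_perm_trans_le_iff (σ : Equiv.Perm κ) {f : α ≃. β} :
    transporter (σ.toEmbedding.trans a) (σ.toEmbedding.trans b) ≤ f ↔ transporter a b ≤ f := by
  simp only [transporter_le_iff]
  exact σ.forall_congr fun _ ↦ Iff.rfl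

theorem range_subset_of_transporter_le {a' : κ' ↪ α} {b' : κ' ↪ β}
    (h : transporter a b ≤ transporter a' b') : Set.range a ⊆ Set.range a' := by
  rintro _ ⟨k, rfl⟩
  obtain ⟨l, hl, -⟩ := transporter_eq_some_iff.1 (transporter_le_iff.1 h k)
  exact ⟨l, hl⟩

variable [LinearOrder α]

theorem transporter_orderEmbedding_injective :
    Injective fun p : Σ r : ℕ, (Fin r ↪o α) × (Fin r ↪ β) ↦
      transporter p.2.1.toEmbedding p.2.2 := by
  rintro ⟨r, a, b⟩ ⟨r', a', b'⟩ h
  have hrange : Set.range a = Set.range a' :=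
    (range_subset_of_transporter_le h.le).antisymm (range_subset_of_transporter_le h.ge)
  obtain rfl : r = r' := by
    simpa [Set.ncard_range_of_injective, a.injective, a'.injective] using
      congrArg Set.ncard hrange
  obtain rfl : a = a' := OrderEmbedding.range_inj.1 hrange
  obtain rfl : b = b' := eq_of_transporter_le le_rfl h.ge
  rfl

theorem transporter_orderEmbedding_surjective [Finite α] :
    Surjective fun p : Σ r : ℕ, (Fin r ↪o α) × (Fin r ↪ β) ↦
      transporter p.2.1.toEmbedding p.2.2 := by
  intro f
  have := Fintype.ofFinite α
  let s : Finset α := {x | (f x).isSome}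
  let a : Fin s.card ↪o α := s.orderEmbOfFin rfl
  have isSome_iff_mem_range (x : α) : (f x).isSome ↔ x ∈ Set.range a := by
    simp [a, s]
  choose b hb using fun k ↦
    Option.isSome_iff_exists.1 ((isSome_iff_mem_range (a k)).2 ⟨k, rfl⟩)
  have b_injective : Injective b := fun k l hkl ↦ a.injective (f.inj (hb k) (hkl ▸ hb l))
  refine ⟨⟨s.card, a, b, b_injective⟩, le_antisymm (transporter_le_iff.2 hb) fun x y hxy ↦ ?_⟩
  obtain ⟨k, rfl⟩ := (isSome_iff_mem_range x).1 (Option.isSome_of_mem hxy)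
  exact transporter_eq_some_iff.2 ⟨k, rfl, Option.some.inj ((hb k).symm.trans hxy)⟩

end Transporter

section OrderEmbedding

/-- An embedding of `Fin r` into a linear order is uniquely `i ∘ σ` with `i` increasing and `σ` a
permutation: the increasing embeddings represent the orbits of the free right action of `S_r`. -/
def compPermEquiv (r : ℕ) (α : Type*) [LinearOrder α] :
    (Fin r ↪o α) × Equiv.Perm (Fin r) ≃ (Fin r ↪ α) where
  toFun p := p.2.toEmbedding.trans p.1.toEmbedding
  invFun a := (OrderEmbedding.ofStrictMono (a ∘ Tuple.sort a)
    ((Tuple.monotone_sort a).strictMono_of_injective (a.injective.comp (Tuple.sort a).injective)),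
    (Tuple.sort a)⁻¹)
  left_inv := by
    rintro ⟨i, σ⟩
    have comp_sort : (i ∘ σ) ∘ Tuple.sort (i ∘ σ) = i := by
      rw [Tuple.comp_perm_comp_sort_eq_comp_sort, Tuple.sort_eq_refl_iff_monotone.2 i.monotone]
      rfl
    have sort_eq : Tuple.sort (i ∘ σ) = σ⁻¹ := by
      ext k
      rw [Equiv.Perm.eq_inv_iff_eq.2 (i.injective (congrFun comp_sort k))]
    exact Prod.ext (DFunLike.coe_injective comp_sort) (inv_eq_iff_eq_inv.2 sort_eq)
  right_inv a := by
    ext k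
    simp

theorem compPermEquiv_eq_toEmbedding_iff {r : ℕ} {α : Type*} [LinearOrder α] {i j : Fin r ↪o α}
    {σ : Equiv.Perm (Fin r)} :
    compPermEquiv r α (i, σ) = j.toEmbedding ↔ i = j ∧ σ = 1 := by
  rw [← Prod.mk_inj, ← (compPermEquiv r α).injective.eq_iff]
  rfl

theorem card_orderEmbedding (r : ℕ) (α : Type*) [LinearOrder α] :
    Nat.card (Fin r ↪o α) = (Nat.card α).choose r := by
  rw [Nat.card_congr Set.powersetCard.ofFinEmbEquiv, Set.powersetCard.card]

end OrderEmbedding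

section MunnMatrix

variable (R : Type*) [Semiring R] (r : ℕ) {α β γ : Type*} [LinearOrder α] [LinearOrder β]
  [LinearOrder γ]

open scoped Classical in
/-- The matrix over `R[S_r]` by which `f` acts on the embeddings of `Fin r`, with respect to the
increasing ones: the `(i, j)` entry is `σ` if `f` carries `j` to `i ∘ σ`, and `0` if there is no
such `σ`. -/
noncomputable def munnMatrix (f : α ≃. β) :
    Matrix (Fin r ↪o β) (Fin r ↪o α) (MonoidAlgebra R (Equiv.Perm (Fin r))) :=
  Matrix.of fun i j ↦ ∑ σ, if transporter j.toEmbedding (compPermEquiv r β (i, σ)) ≤ f then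
    MonoidAlgebra.single σ 1 else 0

open scoped Classical in
theorem coeff_munnMatrix_apply (f : α ≃. β) (i : Fin r ↪o β) (j : Fin r ↪o α)
    (σ : Equiv.Perm (Fin r)) : (munnMatrix R r f i j).coeff σ =
      if transporter j.toEmbedding (compPermEquiv r β (i, σ)) ≤ f then 1 else 0 := by
  simp only [munnMatrix, Matrix.of_apply, MonoidAlgebra.coeff_sum, Finsupp.finsetSum_apply]
  rw [Finset.sum_eq_single σ] <;> aesop

theorem munnMatrix_refl : munnMatrix R r (PEquiv.refl α) = 1 := by
  ext i j σ
  rw [coeff_munnMatrix_apply, transporter_le_refl_iff, compPermEquiv_eq_toEmbedding_iff,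
    Matrix.one_apply, MonoidAlgebra.one_def]
  by_cases hij : i = j <;> simp [hij, Finsupp.single_apply, eq_comm]

theorem munnMatrix_trans [Fintype β] (f : α ≃. β) (g : β ≃. γ) :
    munnMatrix R r (f.trans g) = munnMatrix R r g * munnMatrix R r f := by
  classical
  symm
  refine Matrix.ext fun i j ↦ ?_
  calc (munnMatrix R r g * munnMatrix R r f) i j
      = ∑ l, ∑ τ, ∑ σ,
        if transporter j.toEmbedding (compPermEquiv r β (l, τ)) ≤ f ∧
          transporter l.toEmbedding (compPermEquiv r γ (i, σ)) ≤ g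
        then MonoidAlgebra.single (σ * τ) 1 else 0 := by
        simp only [munnMatrix, Matrix.mul_apply, Matrix.of_apply, Finset.sum_mul_sum,
          ite_zero_mul_ite_zero, MonoidAlgebra.single_mul_single, one_mul]
        refine Finset.sum_congr rfl fun l _ ↦ ?_
        rw [Finset.sum_comm]
        simp only [and_comm]
    _ = ∑ l, ∑ τ, ∑ ρ,
        if transporter j.toEmbedding (compPermEquiv r β (l, τ)) ≤ f ∧
          transporter (compPermEquiv r β (l, τ)) (compPermEquiv r γ (i, ρ)) ≤ g
        then MonoidAlgebra.single ρ 1 else 0 := by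
        refine Finset.sum_congr rfl fun l _ ↦ Finset.sum_congr rfl fun τ _ ↦
          Fintype.sum_equiv (Equiv.mulRight τ) _ _ fun σ ↦ ?_
        rw [← transporter_perm_trans_le_iff τ (a := l.toEmbedding)]
        rfl
    _ = ∑ ρ, ∑ b : Fin r ↪ β,
        if transporter j.toEmbedding b ≤ f ∧ transporter b (compPermEquiv r γ (i, ρ)) ≤ g
        then MonoidAlgebra.single ρ 1 else 0 := by
        rw [eq_comm, Finset.sum_comm, ← Equiv.sum_comp (compPermEquiv r β),
          Fintype.sum_prod_type]
    _ = munnMatrix R r (f.trans g) i j :=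
        Finset.sum_congr rfl fun ρ _ ↦ sum_ite_transporter_le_trans _ _ f g _

end MunnMatrix

section Iso

variable (R : Type*) (n : ℕ)

/-- The product over `r` of the representations of the rook monoid by `munnMatrix`. -/
noncomputable def munnHom [Semiring R] : (Fin n ≃. Fin n) →*
    Π r : Fin (n + 1), Matrix (Fin r ↪o Fin n) (Fin r ↪o Fin n)
      (MonoidAlgebra R (Equiv.Perm (Fin r))) where
  toFun f r := munnMatrix R r f
  map_one' := funext fun r ↦ munnMatrix_refl R r
  map_mul' f g := funext fun r ↦ munnMatrix_trans R r g f

/-- The parametrization of the partial bijections of `Fin n` by rank, range, domain and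
permutation; the range precedes the domain so that the pair is a (row, column) index. -/
noncomputable def transporterEquiv :
    (Σ r : Fin (n + 1), (Fin r ↪o Fin n) × (Fin r ↪o Fin n) × Equiv.Perm (Fin r)) ≃
      (Fin n ≃. Fin n) :=
  .ofBijective
    ((fun p : Σ r : ℕ, (Fin r ↪o Fin n) × (Fin r ↪ Fin n) ↦
        transporter p.2.1.toEmbedding p.2.2) ∘
      Sigma.map Fin.val fun r p ↦ (p.2.1, compPermEquiv r (Fin n) (p.1, p.2.2))) <| by
    constructor
    · refine transporter_orderEmbedding_injective.comp (Fin.val_injective.sigma_map fun r ↦ ?_)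
      rintro ⟨i, j, σ⟩ ⟨i', j', σ'⟩ h
      simpa [and_left_comm] using h
    · intro f
      obtain ⟨⟨r, j, b⟩, rfl⟩ := transporter_orderEmbedding_surjective f
      have hr : r < n + 1 := Nat.lt_succ_of_le (by simpa using Fintype.card_le_of_embedding b)
      obtain ⟨⟨i, σ⟩, rfl⟩ := (compPermEquiv r (Fin n)).surjective b
      exact ⟨⟨⟨r, hr⟩, i, j, σ⟩, rfl⟩

/-- The basis of the matrices `σ • E_{ij}`, indexed by the partial bijections `i ∘ σ ∘ j⁻¹`. -/
noncomputable def munnBasis [Semiring R] : Basis (Fin n ≃. Fin n) R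
    (Π r : Fin (n + 1), Matrix (Fin r ↪o Fin n) (Fin r ↪o Fin n)
      (MonoidAlgebra R (Equiv.Perm (Fin r)))) :=
  (Pi.basis fun r : Fin (n + 1) ↦
    (MonoidAlgebra.basis (Equiv.Perm (Fin r)) R).matrix (Fin r ↪o Fin n) (Fin r ↪o Fin n)).reindex
      (transporterEquiv n)

open scoped Classical in
theorem munnBasis_repr_munnHom [Semiring R] (f g : Fin n ≃. Fin n) :
    (munnBasis R n).repr (munnHom R n f) g = if g ≤ f then 1 else 0 := by
  obtain ⟨⟨r, i, j, σ⟩, rfl⟩ := (transporterEquiv n).surjective g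
  rw [munnBasis, Basis.repr_reindex_apply, Equiv.symm_apply_apply]
  exact coeff_munnMatrix_apply R r f i j σ

theorem lift_munnHom_bijective [CommRing R] :
    Bijective (MonoidAlgebra.lift R _ _ (munnHom R n)) := by
  have : Finite (Fin n ≃. Fin n) := DFunLike.finite _
  refine bijective_of_repr_eq_ite_le (MonoidAlgebra.basis (Fin n ≃. Fin n) R) (munnBasis R n)
    (MonoidAlgebra.lift R _ _ (munnHom R n)).toLinearMap fun f g ↦ ?_
  simp [munnBasis_repr_munnHom]

end Iso

end RookMonoid

theorem rookMonoidAlgebra_iso_general (R : Type*) [CommRing R] (n : ℕ) :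
    Nonempty (MonoidAlgebra R (Fin n ≃. Fin n) ≃ₐ[R]
      Π r : Fin (n + 1), Matrix (Fin (n.choose (r : ℕ))) (Fin (n.choose (r : ℕ)))
        (MonoidAlgebra R (Equiv.Perm (Fin (r : ℕ))))) := by
  let enum (r : ℕ) : (Fin r ↪o Fin n) ≃ Fin (n.choose r) :=
    Finite.equivFinOfCardEq (by rw [RookMonoid.card_orderEmbedding, Nat.card_fin])
  exact ⟨(AlgEquiv.ofBijective _ (RookMonoid.lift_munnHom_bijective R n)).trans <|
    .piCongrRight fun r ↦ Matrix.reindexAlgEquiv R _ (enum r)⟩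

/-- The Munn–Solomon decomposition: the complex monoid algebra of the
rook monoid `R_n` is isomorphic, as a `ℂ`-algebra, to
`∏_{r=0}^{n} M_{C(n,r)}(ℂ[S_r])`. -/
theorem rookMonoidAlgebra_iso (n : ℕ) :
    Nonempty (MonoidAlgebra ℂ (Fin n ≃. Fin n) ≃ₐ[ℂ]
      Π r : Fin (n + 1), Matrix (Fin (n.choose (r : ℕ))) (Fin (n.choose (r : ℕ)))
        (MonoidAlgebra ℂ (Equiv.Perm (Fin (r : ℕ))))) :=
  rookMonoidAlgebra_iso_general ℂ n
end
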